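/- arXiv:1105.5478 — 2 statements merged into one kernel-verified Lean document; each statement's English description precedes it below -/
import Mathlib

section
/- Let G be a group acting on a tree T (a G-tree), let e = (a,b) be a directed edge of T, and let H be the stabilizer of the directed edge e, i.e. H = {g ∈ G | g·a = a and g·b = b}. Then for any vertex v of T, the standard set X_v := {g ∈ G | g·v lies in the a-side of e} is an H-almost invariant subset of G; moreover, for any two vertices v and w of T, the sets X_v and X_w are H-almost equal. -/
/-!
Write `X_v` for the standard set of `(a, b)` with base vertex `v`. For adjacent vertices `v`, `w`,
an element `g` lies in exactly one of `X_v`, `X_w` only if `g` carries the edge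
`{v, w}` onto `{a, b}`, since every other edge of the tree survives the deletion of `{a, b}`. The
elements carrying `(v, w)` to `(a, b)` form either the empty set or a single right coset of the
stabilizer of `(a, b)`, and so do those carrying `(v, w)` to `(b, a)`; hence `X_v` and `X_w` are almost equal (`GTree.standardSet_almostEqual_of_adj`). Almost equality is an equivalence
relation and the tree is connected, so all the `X_v` are almost equal to one another. The
stabilizer preserves the `a`-side, which gives `h X_v = X_v`; and `X_v g = X_{g⁻¹ v}`, so
almost invariance under right translation is a case of the almost equality of standard sets.
-/

open scoped Pointwise

universe u v w

/-- A subset `S` of `G` is `H`-finite if it is contained in the union of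
finitely many right cosets `Hg` of `H` in `G`. -/
def HFinite {G : Type u} [Group G] (H : Subgroup G) (S : Set G) : Prop :=
  ∃ F : Finset G, S ⊆ ⋃ g ∈ F, (H : Set G) * {g}

/-- Two subsets of `G` are `H`-almost equal if their symmetric difference is `H`-finite. -/
def HAlmostEqual {G : Type u} [Group G] (H : Subgroup G) (A B : Set G) : Prop :=
  HFinite H ((A \ B) ∪ (B \ A))

/-- `X` is an `H`-almost invariant subset of `G`: `hX = X` for all `h ∈ H`, and for
every `g ∈ G` the symmetric difference of `Xg` and `X` is `H`-finite. -/
def IsAlmostInvariant {G : Type u} [Group G] (H : Subgroup G) (X : Set G) : Prop :=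
  (∀ h ∈ H, (fun x => h * x) '' X = X) ∧
    ∀ g : G, HAlmostEqual H ((fun x => x * g) '' X) X

/-- An `H`-almost invariant set is nontrivial if neither it nor its complement is `H`-finite. -/
def IsNontrivialAI {G : Type u} [Group G] (H : Subgroup G) (X : Set G) : Prop :=
  ¬ HFinite H X ∧ ¬ HFinite H Xᶜ

/-- A `G`-tree: a connected acyclic simple graph together with an action of `G` on its
vertices by graph automorphisms, such that no element of `G` interchanges the two
endpoints of any edge. -/
structure GTree (G : Type u) [Group G] (V : Type v) where
  graph : SimpleGraph V
  smul : G → V → V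
  smul_one : ∀ x : V, smul 1 x = x
  smul_mul : ∀ (g h : G) (x : V), smul (g * h) x = smul g (smul h x)
  adj_smul : ∀ (g : G) (x y : V), graph.Adj x y → graph.Adj (smul g x) (smul g y)
  no_inversion : ∀ (g : G) (x y : V), graph.Adj x y → ¬ (smul g x = y ∧ smul g y = x)
  connected : graph.Connected
  acyclic : graph.IsAcyclic

namespace GTree

variable {G : Type u} [Group G] {V : Type v}

/-- The stabilizer of the directed edge `(a, b)`. -/
def edgeStab (T : GTree G V) (a b : V) : Subgroup G where
  carrier := {g : G | T.smul g a = a ∧ T.smul g b = b}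
  one_mem' := ⟨T.smul_one a, T.smul_one b⟩
  mul_mem' := by
    rintro x y ⟨hxa, hxb⟩ ⟨hya, hyb⟩
    exact ⟨by rw [T.smul_mul, hya, hxa], by rw [T.smul_mul, hyb, hxb]⟩
  inv_mem' := by
    rintro x ⟨hxa, hxb⟩
    constructor
    · conv_lhs => rw [← hxa]
      rw [← T.smul_mul, inv_mul_cancel, T.smul_one]
    · conv_lhs => rw [← hxb]
      rw [← T.smul_mul, inv_mul_cancel, T.smul_one]

/-- The `a`-side of the directed edge `(a, b)`: the set of vertices reachable from `a`
after deleting the edge `{a, b}`. -/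
def side (T : GTree G V) (a b : V) : Set V :=
  {x : V | (T.graph.deleteEdges {s(a, b)}).Reachable a x}

/-- The standard set determined by the directed edge `(a, b)` and the base vertex `v`:
`{g ∈ G | g • v lies in the a-side of (a, b)}`. -/
def standardSet (T : GTree G V) (a b : V) (v : V) : Set G :=
  {g : G | T.smul g v ∈ T.side a b}

/-- `(T, a, b)` is a splitting of `G` over `H`: the `G`-tree `T` has no global fixed
vertex, `G` acts transitively on the undirected edges, `(a, b)` is a directed edge,
and the stabilizer of `(a, b)` is `H`. -/
def IsSplitting (T : GTree G V) (a b : V) (H : Subgroup G) : Prop :=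
  T.graph.Adj a b ∧
  (∀ x : V, ∃ g : G, T.smul g x ≠ x) ∧
  (∀ c d : V, T.graph.Adj c d →
    ∃ g : G, (T.smul g a = c ∧ T.smul g b = d) ∨ (T.smul g a = d ∧ T.smul g b = c)) ∧
  T.edgeStab a b = H

/-- Two `G`-trees are (`G`-equivariantly) isomorphic: there is a graph isomorphism
commuting with the `G`-actions. -/
def EquivIso {V₁ : Type v} {V₂ : Type w} (T₁ : GTree G V₁) (T₂ : GTree G V₂) : Prop :=
  ∃ f : T₁.graph ≃g T₂.graph, ∀ (g : G) (x : V₁), f (T₁.smul g x) = T₂.smul g (f x)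

end GTree

/-- `Σ(X)`: the family of all translates of `X` and of its complement. -/
def TransSet {G : Type u} [Group G] (X : Set G) : Set (Set G) :=
  {A : Set G | ∃ g : G, A = g • X ∨ A = (g • X)ᶜ}

/-- A corner `C` of a pair `(A, B)` is small if it is `Stab(A)`-finite. -/
def SmallCorner {G : Type u} [Group G] (A C : Set G) : Prop :=
  HFinite (MulAction.stabilizer G A) C

/-- At least two of four statements hold. -/
def TwoOfFour (P₁ P₂ P₃ P₄ : Prop) : Prop :=
  (P₁ ∧ P₂) ∨ (P₁ ∧ P₃) ∨ (P₁ ∧ P₄) ∨ (P₂ ∧ P₃) ∨ (P₂ ∧ P₄) ∨ (P₃ ∧ P₄)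

/-- Almost inclusion: `A ≤ B` iff `A ∩ B*` is empty or is the only small corner of `(A, B)`. -/
def AILE {G : Type u} [Group G] (A B : Set G) : Prop :=
  A ∩ Bᶜ = ∅ ∨
    (SmallCorner A (A ∩ Bᶜ) ∧ ¬ SmallCorner A (A ∩ B) ∧ ¬ SmallCorner A (Aᶜ ∩ B) ∧ ¬ SmallCorner A (Aᶜ ∩ Bᶜ))

/-- `A` crosses `B`: no corner of the pair `(A, B)` is small. -/
def AICrosses {G : Type u} [Group G] (A B : Set G) : Prop :=
  ¬ SmallCorner A (A ∩ B) ∧ ¬ SmallCorner A (A ∩ Bᶜ) ∧ ¬ SmallCorner A (Aᶜ ∩ B) ∧ ¬ SmallCorner A (Aᶜ ∩ Bᶜ)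

/-- A finite family of almost invariant sets satisfies sandwiching. -/
def Sandwiching {G : Type u} [Group G] {n : ℕ} (X : Fin n → Set G) : Prop :=
  ∀ j k : Fin n,
    (∃ A ∈ TransSet (X k), ∃ B ∈ TransSet (X k), AILE A (X j) ∧ AILE (X j) B) ∨
    ∀ A ∈ TransSet (X k), AICrosses (X j) A

/-- The splitting over `H` is a trivially ascending HNN extension: `H` is normal in `G`
and `G/H` is infinite cyclic. -/
def TrivAscHNN {G : Type u} [Group G] (H : Subgroup G) : Prop :=
  H.Normal ∧ ∃ t : G, (∀ g : G, ∃ n : ℤ, g * (t ^ n)⁻¹ ∈ H) ∧ ∀ n : ℤ, t ^ n ∈ H → n = 0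

/-- Two subsets are nested if one of the four inclusions among them and their
complements holds. -/
def Nested {G : Type u} (A B : Set G) : Prop :=
  A ⊆ B ∨ A ⊆ Bᶜ ∨ Aᶜ ⊆ B ∨ Aᶜ ⊆ Bᶜ

/-- `X` crosses `Y` with respect to the subgroup `L`: no corner of `(X, Y)` is `L`-finite. -/
def CrossesWrt {G : Type u} [Group G] (L : Subgroup G) (X Y : Set G) : Prop :=
  ¬ HFinite L (X ∩ Y) ∧ ¬ HFinite L (X ∩ Yᶜ) ∧ ¬ HFinite L (Xᶜ ∩ Y) ∧ ¬ HFinite L (Xᶜ ∩ Yᶜ)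

theorem HFinite.mono {G : Type u} [Group G] {H : Subgroup G} {S S' : Set G}
    (h : HFinite H S') (hS : S ⊆ S') : HFinite H S := by
  obtain ⟨F, hF⟩ := h
  exact ⟨F, hS.trans hF⟩

theorem HFinite.union {G : Type u} [Group G] {H : Subgroup G} {S S' : Set G}
    (h : HFinite H S) (h' : HFinite H S') : HFinite H (S ∪ S') := by
  classical
  obtain ⟨F, hF⟩ := h
  obtain ⟨F', hF'⟩ := h'
  refine ⟨F ∪ F', Set.union_subset (hF.trans ?_) (hF'.trans ?_)⟩
  · exact Set.biUnion_subset_biUnion_left fun x hx => Finset.mem_union_left _ hx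
  · exact Set.biUnion_subset_biUnion_left fun x hx => Finset.mem_union_right _ hx

theorem HAlmostEqual.refl {G : Type u} [Group G] (H : Subgroup G) (A : Set G) :
    HAlmostEqual H A A :=
  ⟨∅, by simp⟩

theorem HAlmostEqual.trans {G : Type u} [Group G] {H : Subgroup G} {A B C : Set G}
    (h : HAlmostEqual H A B) (h' : HAlmostEqual H B C) : HAlmostEqual H A C := by
  refine (HFinite.union h h').mono ?_
  intro x hx
  simp only [Set.mem_union, Set.mem_sdiff] at hx ⊢
  tauto

/-- A set any two of whose elements differ by left multiplication by an element of `H` is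
`H`-finite: it is empty or lies in a single right coset. -/
theorem HFinite.of_mul_inv_mem {G : Type u} [Group G] {H : Subgroup G} {S : Set G}
    (h : ∀ x ∈ S, ∀ y ∈ S, x * y⁻¹ ∈ H) : HFinite H S := by
  rcases S.eq_empty_or_nonempty with rfl | ⟨y, hy⟩
  · exact ⟨∅, by simp⟩
  · refine ⟨{y}, fun x hx => ?_⟩
    simp only [Finset.mem_singleton, Set.iUnion_iUnion_eq_left]
    exact ⟨x * y⁻¹, h x hx y hy, y, rfl, by simp⟩

namespace GTree

theorem smul_inv_of_eq {G : Type u} [Group G] {V : Type v} (T : GTree G V) {g : G} {x y : V}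
    (h : T.smul g x = y) : T.smul g⁻¹ y = x := by
  rw [← h, ← T.smul_mul, inv_mul_cancel, T.smul_one]

theorem hFinite_edge_transporter {G : Type u} [Group G] {V : Type v} (T : GTree G V)
    (a b v w : V) : HFinite (T.edgeStab a b) {g : G | T.smul g v = a ∧ T.smul g w = b} := by
  refine HFinite.of_mul_inv_mem ?_
  rintro x ⟨hxv, hxw⟩ y ⟨hyv, hyw⟩
  refine ⟨?_, ?_⟩
  · rw [T.smul_mul, T.smul_inv_of_eq hyv, hxv]
  · rw [T.smul_mul, T.smul_inv_of_eq hyw, hxw]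

/-- An edge with exactly one endpoint in the `a`-side of `(a, b)` is the edge `{a, b}`. -/
theorem edge_eq_of_mem_side {G : Type u} [Group G] {V : Type v} (T : GTree G V)
    {a b x y : V} (hxy : T.graph.Adj x y) (hx : x ∈ T.side a b) (hy : y ∉ T.side a b) :
    s(x, y) = s(a, b) := by
  by_contra hne
  refine hy (SimpleGraph.Reachable.trans hx (SimpleGraph.Adj.reachable ?_))
  rw [SimpleGraph.deleteEdges_adj]
  exact ⟨hxy, hne⟩

theorem standardSet_almostEqual_of_adj {G : Type u} [Group G] {V : Type v} (T : GTree G V)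
    (a b : V) {v w : V} (hvw : T.graph.Adj v w) :
    HAlmostEqual (T.edgeStab a b) (T.standardSet a b v) (T.standardSet a b w) := by
  refine ((T.hFinite_edge_transporter a b v w).union
    (T.hFinite_edge_transporter a b w v)).mono ?_
  rintro g (⟨h1, h2⟩ | ⟨h1, h2⟩)
  · have := T.edge_eq_of_mem_side (T.adj_smul g v w hvw) h1 h2
    rcases Sym2.eq_iff.1 this with h | h
    · exact Or.inl h
    · exact Or.inr h.symm
  · have := T.edge_eq_of_mem_side (T.adj_smul g w v hvw.symm) h1 h2
    rcases Sym2.eq_iff.1 this with h | h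
    · exact Or.inr h
    · exact Or.inl h.symm

theorem standardSet_almostEqual {G : Type u} [Group G] {V : Type v} (T : GTree G V)
    (a b v w : V) :
    HAlmostEqual (T.edgeStab a b) (T.standardSet a b v) (T.standardSet a b w) := by
  obtain ⟨p⟩ := T.connected.preconnected v w
  induction p with
  | nil => exact HAlmostEqual.refl _ _
  | cons h _ ih => exact (T.standardSet_almostEqual_of_adj a b h).trans ih

theorem smul_injective {G : Type u} [Group G] {V : Type v} (T : GTree G V) (g : G) :
    Function.Injective (T.smul g) := fun x y h => by
  rw [← T.smul_inv_of_eq h, T.smul_inv_of_eq rfl]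

theorem smul_mem_side {G : Type u} [Group G] {V : Type v} (T : GTree G V) {a b : V} {h : G}
    (hh : h ∈ T.edgeStab a b) {x : V} (hx : x ∈ T.side a b) : T.smul h x ∈ T.side a b := by
  obtain ⟨ha, hb⟩ := hh
  let f : T.graph.deleteEdges {s(a, b)} →g T.graph.deleteEdges {s(a, b)} :=
    { toFun := T.smul h
      map_rel' := by
        intro x y hxy
        rw [SimpleGraph.deleteEdges_adj] at hxy ⊢
        refine ⟨T.adj_smul h x y hxy.1, fun he => hxy.2 ?_⟩
        -- `h` fixes `a` and `b`, so an edge mapped onto `{a, b}` is `{a, b}` itself.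
        apply Sym2.map.injective (T.smul_injective h)
        simpa [Sym2.map_mk, ha, hb] using he }
  have := SimpleGraph.Reachable.map f hx
  change (T.graph.deleteEdges {s(a, b)}).Reachable (T.smul h a) (T.smul h x) at this
  rwa [ha] at this

theorem image_mul_left_standardSet {G : Type u} [Group G] {V : Type v} (T : GTree G V)
    (a b v : V) {h : G} (hh : h ∈ T.edgeStab a b) :
    (fun x => h * x) '' T.standardSet a b v = T.standardSet a b v := by
  ext g
  constructor
  · rintro ⟨x, hx, rfl⟩
    change T.smul (h * x) v ∈ T.side a b
    rw [T.smul_mul]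
    exact T.smul_mem_side hh hx
  · intro hg
    refine ⟨h⁻¹ * g, ?_, by simp⟩
    change T.smul (h⁻¹ * g) v ∈ T.side a b
    rw [T.smul_mul]
    exact T.smul_mem_side (inv_mem hh) hg

theorem image_mul_right_standardSet {G : Type u} [Group G] {V : Type v} (T : GTree G V)
    (a b v : V) (g : G) :
    (fun x => x * g) '' T.standardSet a b v = T.standardSet a b (T.smul g⁻¹ v) := by
  ext x
  constructor
  · rintro ⟨x, hx, rfl⟩
    change T.smul (x * g) (T.smul g⁻¹ v) ∈ T.side a b
    rw [← T.smul_mul, mul_inv_cancel_right]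
    exact hx
  · intro hx
    refine ⟨x * g⁻¹, ?_, by simp⟩
    change T.smul (x * g⁻¹) v ∈ T.side a b
    rw [T.smul_mul]
    exact hx

end GTree

/-- the standard set determined by a directed edge and a base vertex is
almost invariant over the edge stabilizer, and different base vertices give
almost equal sets. -/
theorem statement0 {G : Type u} [Group G] {V : Type v} (T : GTree G V) (a b : V)
    (hab : T.graph.Adj a b) (H : Subgroup G) (hH : H = T.edgeStab a b) :
    (∀ v : V, IsAlmostInvariant H (T.standardSet a b v)) ∧
    (∀ v w : V, HAlmostEqual H (T.standardSet a b v) (T.standardSet a b w)) := by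
  subst hH
  refine ⟨fun v => ⟨fun h hh => T.image_mul_left_standardSet a b v hh, fun g => ?_⟩,
    T.standardSet_almostEqual a b⟩
  rw [T.image_mul_right_standardSet]
  exact T.standardSet_almostEqual a b _ _
end

section
/- Let G be any group with subgroups H and K. Let Y be the almost invariant set arising from a splitting of G over K, i.e. Y is the standard set determined by a directed edge e with stabilizer K and a base vertex v of the tree of the splitting. Suppose Y contains at least one right coset Hx of H (equivalently, Y contains a nonempty subset X' with hX' = X' for all h ∈ H). Then for every g₀ ∈ Y* := G \ Y, one has Hg₀ ∩ Y* = (H ∩ K)g₀ ∩ Y*, where Hg₀ = {hg₀ | h ∈ H}; in particular Hg₀ ∩ Y* is both H-finite and K-finite. -/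
/-!
The proof is metric. Write `A` for the `a`-side of the edge `(a, b)` and `d` for the distance in the
tree. The only geometric input is `GTree.dist_ge_of_separated`: a walk from `x ∈ A` to `y ∉ A`
crosses `(a, b)`, so `d x a + 1 + d b y ≤ d x y`.

Let `h ∈ H`, `q = g₀ v ∉ A` and `h q ∉ A`; the aim is `h ∈ K`.

* One of `h b`, `h⁻¹ b` lies outside `A`. If `h b ∈ A`, then comparing it with `h q ∉ A` gives
  `d (h q) b < d q b`; if `h⁻¹ b ∈ A`, then comparing it with `q ∉ A` gives `d q b < d (h q) b`.
* Let `p` be a point of the orbit `H x v ⊆ A` closest to `a`, and let `k ∈ {h, h⁻¹}` satisfy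
  `k b ∉ A`. Separation of `k p` from `k b` yields `d (k p) a + d b (k b) ≤ d p a`, so minimality
  of `p` forces `k b = b` and `d (k p) a = d p a`. If `k a ∉ A`, separating `k p` from `k a` would
  give `d (k p) a < d p a`; so `k a ∈ A`, and separating it from `b = k b` gives `k a = a`.
  Thus `k ∈ K`, and so `h ∈ K`.
-/

open scoped Pointwise

universe u v w

namespace GTree

variable {G : Type u} [Group G] {V : Type v}

lemma smul_inv_smul (T : GTree G V) (g : G) (x : V) : T.smul g (T.smul g⁻¹ x) = x := by
  rw [← T.smul_mul, mul_inv_cancel, T.smul_one]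

lemma inv_smul_smul (T : GTree G V) (g : G) (x : V) : T.smul g⁻¹ (T.smul g x) = x := by
  rw [← T.smul_mul, inv_mul_cancel, T.smul_one]

lemma dist_smul_le (T : GTree G V) (g : G) (x y : V) :
    T.graph.dist (T.smul g x) (T.smul g y) ≤ T.graph.dist x y := by
  obtain ⟨p, hp⟩ := T.connected.exists_walk_length_eq_dist x y
  let f : T.graph →g T.graph := ⟨T.smul g, fun {x y} h => T.adj_smul g x y h⟩
  rw [← hp, ← SimpleGraph.Walk.length_map f p]
  exact SimpleGraph.dist_le (p.map f)

lemma dist_smul (T : GTree G V) (g : G) (x y : V) :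
    T.graph.dist (T.smul g x) (T.smul g y) = T.graph.dist x y := by
  refine le_antisymm (T.dist_smul_le g x y) ?_
  simpa only [T.inv_smul_smul] using T.dist_smul_le g⁻¹ (T.smul g x) (T.smul g y)

/-- Every edge of a tree is a bridge, so the far endpoint is not on the near side. -/
lemma right_notMem_side (T : GTree G V) {a b : V} (hab : T.graph.Adj a b) :
    b ∉ T.side a b := by
  have h := SimpleGraph.isAcyclic_iff_forall_adj_isBridge.mp T.acyclic hab
  exact SimpleGraph.isBridge_iff.mp h

/-- The edge `(a, b)` is the only one leaving its `a`-side. -/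
lemma eq_of_adj_of_side (T : GTree G V) {a b x z : V} (hab : T.graph.Adj a b)
    (hxz : T.graph.Adj x z) (hx : x ∈ T.side a b) (hz : z ∉ T.side a b) : x = a ∧ z = b := by
  by_cases h : s(x, z) = s(a, b)
  · rcases Sym2.eq_iff.mp h with h | ⟨rfl, rfl⟩
    · exact h
    · exact absurd hx (T.right_notMem_side hab)
  · refine absurd ?_ hz
    have hadj : (T.graph.deleteEdges {s(a, b)}).Adj x z := by
      rw [SimpleGraph.deleteEdges_adj]
      exact ⟨hxz, h⟩
    exact SimpleGraph.Reachable.trans hx hadj.reachable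

/-- A walk leaving the `a`-side of `(a, b)` must cross this edge. -/
lemma length_ge_of_separated (T : GTree G V) {a b : V} (hab : T.graph.Adj a b) {x y : V}
    (w : T.graph.Walk x y) (hx : x ∈ T.side a b) (hy : y ∉ T.side a b) :
    T.graph.dist x a + 1 + T.graph.dist b y ≤ w.length := by
  induction w with
  | nil => exact absurd hx hy
  | @cons x z y hxz w ih =>
    rw [SimpleGraph.Walk.length_cons]
    by_cases hz : z ∈ T.side a b
    · have h1 := ih hz hy
      have h2 := T.connected.dist_triangle (u := x) (v := z) (w := a)
      have h3 : T.graph.dist x z = 1 := SimpleGraph.dist_eq_one_iff_adj.mpr hxz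
      omega
    · obtain ⟨rfl, rfl⟩ := T.eq_of_adj_of_side hab hxz hx hz
      have h1 := SimpleGraph.dist_le w
      rw [SimpleGraph.dist_self]
      omega

lemma dist_ge_of_separated (T : GTree G V) {a b : V} (hab : T.graph.Adj a b) {x y : V}
    (hx : x ∈ T.side a b) (hy : y ∉ T.side a b) :
    T.graph.dist x a + 1 + T.graph.dist b y ≤ T.graph.dist x y := by
  obtain ⟨w, hw⟩ := T.connected.exists_walk_length_eq_dist x y
  rw [← hw]
  exact T.length_ge_of_separated hab w hx hy

/-- If `k p` stays on the `a`-side and is no closer to `a` than `p` is, and `k b` stays off the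
`a`-side, then `k` fixes the edge `(a, b)`. -/
lemma mem_edgeStab_of_minimal (T : GTree G V) {a b p : V} (hab : T.graph.Adj a b) {k : G}
    (hkp : T.smul k p ∈ T.side a b) (hmin : T.graph.dist p a ≤ T.graph.dist (T.smul k p) a)
    (hkb : T.smul k b ∉ T.side a b) : k ∈ T.edgeStab a b := by
  have hab1 : T.graph.dist a b = 1 := SimpleGraph.dist_eq_one_iff_adj.mpr hab
  have h1 := T.dist_ge_of_separated hab hkp hkb
  rw [T.dist_smul] at h1
  have h2 := T.connected.dist_triangle (u := p) (v := a) (w := b)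
  have hb : b = T.smul k b := T.connected.dist_eq_zero_iff.mp (by omega)
  have hka : T.smul k a ∈ T.side a b := by
    by_contra hka
    have h3 := T.dist_ge_of_separated hab hkp hka
    rw [T.dist_smul] at h3
    omega
  have h4 := T.dist_ge_of_separated hab hka (T.right_notMem_side hab)
  have h5 := T.dist_smul k a b
  rw [← hb] at h5
  exact ⟨T.connected.dist_eq_zero_iff.mp (by omega), hb.symm⟩

/-- If `q` and `h q` both lie off the `a`-side, then `h` and `h⁻¹` cannot both move `b` into
the `a`-side. -/
lemma smul_notMem_side_or_inv (T : GTree G V) {a b q : V} (hab : T.graph.Adj a b) {h : G}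
    (hq : q ∉ T.side a b) (hhq : T.smul h q ∉ T.side a b) :
    T.smul h b ∉ T.side a b ∨ T.smul h⁻¹ b ∉ T.side a b := by
  by_contra! hcon
  have h1 := T.dist_ge_of_separated hab hcon.1 hhq
  have h2 := T.dist_ge_of_separated hab hcon.2 hq
  rw [T.dist_smul] at h1
  have h3 := T.dist_smul h (T.smul h⁻¹ b) q
  rw [T.smul_inv_smul] at h3
  omega

/-- If the `H`-orbit of `p₀` stays on the `a`-side, then every element of `H` keeping some point
off the `a`-side fixes the edge `(a, b)`. -/
lemma mem_edgeStab_of_orbit (T : GTree G V) {a b p₀ q : V} (hab : T.graph.Adj a b)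
    (H : Subgroup G) (horb : ∀ g ∈ H, T.smul g p₀ ∈ T.side a b) {h : G} (hh : h ∈ H)
    (hq : q ∉ T.side a b) (hhq : T.smul h q ∉ T.side a b) : h ∈ T.edgeStab a b := by
  obtain ⟨m, hm⟩ := exists_minimal_of_wellFoundedLT (fun n : ℕ =>
    ∃ g ∈ H, T.graph.dist (T.smul g p₀) a = n) ⟨_, 1, H.one_mem, rfl⟩
  obtain ⟨⟨g, hg, rfl⟩, hmin⟩ := hm
  have key : ∀ k ∈ H, T.smul k b ∉ T.side a b → k ∈ T.edgeStab a b := by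
    intro k hk hkb
    refine T.mem_edgeStab_of_minimal (p := T.smul g p₀) hab ?_ ?_ hkb
    · rw [← T.smul_mul]
      exact horb _ (H.mul_mem hk hg)
    · rw [← T.smul_mul]
      exact (le_total _ _).elim id (hmin ⟨k * g, H.mul_mem hk hg, rfl⟩)
  rcases T.smul_notMem_side_or_inv hab hq hhq with hb | hb
  · exact key h hh hb
  · exact inv_mem_iff.mp (key h⁻¹ (H.inv_mem hh) hb)

end GTree

/-- if the almost invariant set `Y` arising from a splitting of `G` over `K`
contains a right coset of `H`, then for any `g₀ ∈ Y*` we have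
`Hg₀ ∩ Y* = (H ∩ K)g₀ ∩ Y*`; in particular this set is both `H`-finite and `K`-finite. -/
theorem statement1 {G : Type u} [Group G] {V : Type v} (H K : Subgroup G)
    (T : GTree G V) (a b : V) (hsplit : T.IsSplitting a b K) (v : V)
    (Y : Set G) (hY : Y = T.standardSet a b v)
    (hcoset : ∃ x : G, (H : Set G) * {x} ⊆ Y)
    (g₀ : G) (hg₀ : g₀ ∈ Yᶜ) :
    ((H : Set G) * {g₀}) ∩ Yᶜ = (((H ⊓ K : Subgroup G) : Set G) * {g₀}) ∩ Yᶜ ∧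
    HFinite H (((H : Set G) * {g₀}) ∩ Yᶜ) ∧ HFinite K (((H : Set G) * {g₀}) ∩ Yᶜ) := by
  obtain ⟨hab, -, -, rfl⟩ := hsplit
  obtain ⟨x, hx⟩ := hcoset
  subst hY
  have horb : ∀ g ∈ H, T.smul g (T.smul x v) ∈ T.side a b := by
    intro g hg
    rw [← T.smul_mul]
    exact hx (Set.mul_mem_mul hg rfl)
  have heq : ((H : Set G) * {g₀}) ∩ (T.standardSet a b v)ᶜ =
      (((H ⊓ T.edgeStab a b : Subgroup G) : Set G) * {g₀}) ∩ (T.standardSet a b v)ᶜ := by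
    ext y
    simp only [Set.mem_inter_iff, Set.mul_singleton, Set.mem_image, SetLike.mem_coe]
    constructor
    · rintro ⟨⟨h, hh, rfl⟩, hy⟩
      refine ⟨⟨h, ⟨hh, ?_⟩, rfl⟩, hy⟩
      refine T.mem_edgeStab_of_orbit (q := T.smul g₀ v) hab H horb hh hg₀ ?_
      rw [← T.smul_mul]
      exact hy
    · rintro ⟨⟨h, hh, rfl⟩, hy⟩
      exact ⟨⟨h, hh.1, rfl⟩, hy⟩
  refine ⟨heq, ⟨{g₀}, ?_⟩, ⟨{g₀}, ?_⟩⟩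
  · simp
  · rw [heq]
    rintro _ ⟨⟨h, hh, _, rfl, rfl⟩, -⟩
    simpa using hh.2
end
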